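/- Let (A,[·,·],α,β) be a regular BiHom-Lie algebra over a field K of characteristic zero. Then there exists a compatible BiHom-post-Lie algebra structure on A (i.e., a bilinear bracket [·,·]' and bilinear operation ▷ such that (A,[·,·]',▷,α,β) is a BiHom-post-Lie algebra whose sub-adjacent BiHom-Lie bracket x ▷ y − α⁻¹β(y) ▷ αβ⁻¹(x) + [x,y]' equals [x,y]) if and only if there exists some λ ∈ K, a regular A-module K-algebra (V,[·,·]_V,ρ,φ,ψ), and an invertible O-operator T : V → A of weight λ associated to it. -/

import Mathlib

section Defs

variable (K : Type*) [Field K]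
variable {A V : Type*} [AddCommGroup A] [Module K A] [AddCommGroup V] [Module K V]

/-- `f : A → A → V` is bilinear over `K`. -/
def IsBilin (f : A → A → V) : Prop :=
  (∀ y, IsLinearMap K fun x => f x y) ∧ (∀ x, IsLinearMap K fun y => f x y)

/-- `b` is a Lie bracket on `A`. -/
def IsLieBracket (b : A → A → A) : Prop :=
  IsBilin K b ∧ (∀ x y, b x y = - b y x) ∧
    (∀ x y z, b x (b y z) + b y (b z x) + b z (b x y) = 0)

/-- `(A, b, t)` is a (left) post-Lie algebra. -/
def IsPostLie (b t : A → A → A) : Prop :=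
  IsLieBracket K b ∧ IsBilin K t ∧
    (∀ x y z, t x (b y z) = b (t x y) z + b y (t x z)) ∧
    (∀ x y z, t (b x y) z =
      (t x (t y z) - t (t x y) z) - (t y (t x z) - t (t y x) z))

/-- `ρ` is a representation of the Lie algebra `(A, b)` on `V`. -/
def IsLieRep (b : A → A → A) (ρ : A → V → V) : Prop :=
  (∀ x, IsLinearMap K (ρ x)) ∧ (∀ v, IsLinearMap K fun x => ρ x v) ∧
    (∀ x y v, ρ (b x y) v = ρ x (ρ y v) - ρ y (ρ x v))

/-- `(A, b, α, β)` is a BiHom-Lie algebra. -/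
def IsBiHomLie (b : A → A → A) (α β : A → A) : Prop :=
  IsBilin K b ∧ IsLinearMap K α ∧ IsLinearMap K β ∧
    (∀ x, α (β x) = β (α x)) ∧
    (∀ x y, α (b x y) = b (α x) (α y)) ∧
    (∀ x y, β (b x y) = b (β x) (β y)) ∧
    (∀ x y, b (β x) (α y) = - b (β y) (α x)) ∧
    (∀ x y z, b (β (β x)) (b (β y) (α z)) + b (β (β y)) (b (β z) (α x)) +
        b (β (β z)) (b (β x) (α y)) = 0)

/-- `(V, ρ, φ, ψ)` is a representation of the BiHom-Lie algebra `(A, b, α, β)`. -/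
def IsBiHomRep (b : A → A → A) (α β : A → A) (ρ : A → V → V) (φ ψ : V → V) : Prop :=
  IsLinearMap K φ ∧ IsLinearMap K ψ ∧ (∀ v, φ (ψ v) = ψ (φ v)) ∧
    (∀ x, IsLinearMap K (ρ x)) ∧ (∀ v, IsLinearMap K fun x => ρ x v) ∧
    (∀ x v, ρ (α x) (φ v) = φ (ρ x v)) ∧
    (∀ x v, ρ (β x) (ψ v) = ψ (ρ x v)) ∧
    (∀ x y v, ρ (b (β x) y) (ψ v) = ρ (α (β x)) (ρ y v) - ρ (β y) (ρ (α x) v))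

/-- `(A, b, t, α, β)` is a (left) BiHom-post-Lie algebra. -/
def IsBiHomPostLie (b t : A → A → A) (α β : A → A) : Prop :=
  IsBiHomLie K b α β ∧ IsBilin K t ∧
    (∀ x y, α (t x y) = t (α x) (α y)) ∧
    (∀ x y, β (t x y) = t (β x) (β y)) ∧
    (∀ x y z, t (α (β x)) (b y z) = b (t (β x) y) (β z) + b (β y) (t (α x) z)) ∧
    (∀ x y z, t (b (β x) (α y)) (β z) =
      (t (α (β x)) (t (α y) z) - t (t (β x) (α y)) (β z)) -
      (t (α (β y)) (t (α x) z) - t (t (β y) (α x)) (β z)))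

/-- `(V, bv, ρ, φ, ψ)` is an `A`-module `K`-algebra over the BiHom-Lie algebra
`(A, b, α, β)`. -/
def IsModuleKAlgebra (b : A → A → A) (α β : A → A) (bv : V → V → V)
    (ρ : A → V → V) (φ ψ : V → V) : Prop :=
  IsBiHomLie K bv φ ψ ∧ IsBiHomRep K b α β ρ φ ψ ∧
    (∀ x u v, ρ (α (β x)) (bv u v) = bv (ρ (β x) u) (ψ v) + bv (ψ u) (ρ (α x) v))

end Defs

/-- The data of a regular `A`-module `K`-algebra together with an invertible
`O`-operator `T : V → A` of weight `lam` on it. -/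
structure InvertibleOOperatorData (K : Type u) [Field K] {A : Type v}
    [AddCommGroup A] [Module K A] (b : A → A → A) (α β : A → A) (lam : K) :
    Type (max (v + 1) u) where
  V : Type v
  [instAddCommGroup : AddCommGroup V]
  [instModule : Module K V]
  bv : V → V → V
  ρ : A → V → V
  φ : V → V
  ψ : V → V
  φ' : V → V
  ψ' : V → V
  T : V → A
  hmod : IsModuleKAlgebra K b α β bv ρ φ ψ
  hφφ' : ∀ v, φ (φ' v) = v
  hφ'φ : ∀ v, φ' (φ v) = v
  hψψ' : ∀ v, ψ (ψ' v) = v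
  hψ'ψ : ∀ v, ψ' (ψ v) = v
  hT : IsLinearMap K T
  hTbij : Function.Bijective T
  hTφ : ∀ v, T (φ v) = α (T v)
  hTψ : ∀ v, T (ψ v) = β (T v)
  hO : ∀ u v, b (T u) (T v) =
    T (ρ (T u) v - ρ (T (φ' (ψ v))) (φ (ψ' u)) + lam • bv u v)

/-! A BiHom-post-Lie structure with sub-adjacent bracket `b` is the same thing as a module algebra
structure over `(A, b)` on `A` itself for which the identity is an `O`-operator of weight `1`.
An invertible `O`-operator `T : V → A` of weight `lam` transports the module algebra `V` to `A`;
after absorbing `lam` into the bracket, `T` becomes the identity of `A`. -/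

section SubAdjacent

variable {A : Type*} [AddCommGroup A]

/-- The sub-adjacent bracket `x ▷ y - α⁻¹β(y) ▷ αβ⁻¹(x) + [x, y]` of a BiHom-post-Lie algebra with
bracket `b` and product `t`; the inverses of `α` and `β` are passed as `α'` and `β'`. -/
def subAdjacentBracket (b t : A → A → A) (α β α' β' : A → A) (x y : A) : A :=
  t x y - t (α' (β y)) (α (β' x)) + b x y

theorem subAdjacentBracket_apply_apply {b t : A → A → A} {α β α' β' : A → A}
    (hα'α : Function.LeftInverse α' α) (hβ'β : Function.LeftInverse β' β)
    (hαβ : Function.Commute α β) (x y : A) :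
    subAdjacentBracket b t α β α' β' (β x) (α y) =
      t (β x) (α y) - t (β y) (α x) + b (β x) (α y) := by
  rw [subAdjacentBracket, ← hαβ y, hα'α, hβ'β]

variable {K : Type*} [Field K] [Module K A]

theorem isBiHomPostLie_iff_isModuleKAlgebra_subAdjacentBracket {b t : A → A → A}
    {α β α' β' : A → A} (hαα' : Function.RightInverse α' α) (hα'α : Function.LeftInverse α' α)
    (hβ'β : Function.LeftInverse β' β) :
    IsBiHomPostLie K b t α β ↔
      IsModuleKAlgebra K (subAdjacentBracket b t α β α' β') α β b t α β := by
  constructor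
  · rintro ⟨hb, ht, htα, htβ, hder, hpost⟩
    have ⟨_, hα, hβ, hαβ, _⟩ := hb
    refine ⟨hb, ⟨hα, hβ, hαβ, ht.2, ht.1, fun x y => (htα x y).symm, fun x y => (htβ x y).symm,
      fun x y z => ?_⟩, hder⟩
    obtain ⟨y, rfl⟩ := hαα'.surjective y
    rw [subAdjacentBracket_apply_apply hα'α hβ'β hαβ, (ht.1 _).map_add, (ht.1 _).map_sub, hpost,
      ← hαβ y]
    abel
  · rintro ⟨hb, ⟨_, _, hαβ, ht₂, ht₁, htα, htβ, hrep⟩, hder⟩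
    refine ⟨hb, ⟨ht₁, ht₂⟩, fun x y => (htα x y).symm, fun x y => (htβ x y).symm, hder,
      fun x y z => ?_⟩
    have hxy := hrep x (α y) z
    rw [subAdjacentBracket_apply_apply hα'α hβ'β hαβ, (ht₁ _).map_add, (ht₁ _).map_sub,
      ← hαβ y] at hxy
    rw [eq_sub_of_add_eq' hxy]
    abel

end SubAdjacent

section Scaling

variable {K A V : Type*} [Field K] [AddCommGroup A] [Module K A] [AddCommGroup V] [Module K V]

theorem IsBilin.const_smul {f : A → A → V} (hf : IsBilin K f) (c : K) :
    IsBilin K fun x y => c • f x y :=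
  ⟨fun y => (c • (hf.1 y).mk').isLinear, fun x => (c • (hf.2 x).mk').isLinear⟩

theorem IsBiHomLie.const_smul {b : A → A → A} {α β : A → A} (hb : IsBiHomLie K b α β) (c : K) :
    IsBiHomLie K (fun x y => c • b x y) α β := by
  obtain ⟨hbilin, hα, hβ, hαβ, hbα, hbβ, hskew, hjacobi⟩ := hb
  refine ⟨hbilin.const_smul c, hα, hβ, hαβ, fun x y => ?_, fun x y => ?_, fun x y => ?_,
    fun x y z => ?_⟩
  · rw [hα.map_smul, hbα]
  · rw [hβ.map_smul, hbβ]
  · simp only [hskew x y, smul_neg]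
  · simp only [(hbilin.2 _).map_smul, ← smul_add, hjacobi, smul_zero]

theorem IsModuleKAlgebra.const_smul {b : A → A → A} {α β : A → A} {bv : V → V → V}
    {ρ : A → V → V} {φ ψ : V → V} (h : IsModuleKAlgebra K b α β bv ρ φ ψ) (c : K) :
    IsModuleKAlgebra K b α β (fun u v => c • bv u v) ρ φ ψ := by
  obtain ⟨hbv, hρ, hder⟩ := h
  have ⟨_, _, _, hρ_linear, _⟩ := hρ
  refine ⟨hbv.const_smul c, hρ, fun x u v => ?_⟩
  rw [(hρ_linear _).map_smul, hder, smul_add]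

end Scaling

section Image

variable {K A V W : Type*} [Field K] [AddCommGroup A] [Module K A] [AddCommGroup V] [Module K V]
  [AddCommGroup W] [Module K W] {f : V →ₗ[K] W}

theorem isLinearMap_of_surjective {V' W' : Type*} [AddCommGroup V'] [Module K V']
    [AddCommGroup W'] [Module K W'] (hf : Function.Surjective f) (f' : V' →ₗ[K] W')
    {g : V → V'} {g' : W → W'} (hg : IsLinearMap K g) (hfg : ∀ v, f' (g v) = g' (f v)) :
    IsLinearMap K g' where
  map_add := hf.forall₂.2 fun u v => by
    rw [← map_add, ← hfg, ← hfg, ← hfg, hg.map_add, map_add]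
  map_smul c := hf.forall.2 fun v => by
    rw [← map_smul, ← hfg, ← hfg, hg.map_smul, map_smul]

theorem IsBilin.of_surjective {V' W' : Type*} [AddCommGroup V'] [Module K V'] [AddCommGroup W']
    [Module K W'] (hf : Function.Surjective f) (f' : V' →ₗ[K] W') {b : V → V → V'}
    {b' : W → W → W'} (hb : IsBilin K b) (hfb : ∀ u v, f' (b u v) = b' (f u) (f v)) :
    IsBilin K b' :=
  ⟨hf.forall.2 fun v => isLinearMap_of_surjective hf f' (hb.1 v) fun u => hfb u v,
    hf.forall.2 fun u => isLinearMap_of_surjective hf f' (hb.2 u) (hfb u)⟩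

variable {φ ψ : V → V} {φ' ψ' : W → W}

theorem IsBiHomLie.of_surjective (hf : Function.Surjective f) (hfφ : Function.Semiconj f φ φ')
    (hfψ : Function.Semiconj f ψ ψ') {b : V → V → V} {b' : W → W → W}
    (hb : IsBiHomLie K b φ ψ) (hfb : ∀ u v, f (b u v) = b' (f u) (f v)) :
    IsBiHomLie K b' φ' ψ' := by
  obtain ⟨hbilin, hφ, hψ, hφψ, hbφ, hbψ, hskew, hjacobi⟩ := hb
  refine ⟨hbilin.of_surjective hf f hfb, isLinearMap_of_surjective hf f hφ hfφ,
    isLinearMap_of_surjective hf f hψ hfψ, hf.forall.2 fun u => ?_, hf.forall₂.2 fun u v => ?_,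
    hf.forall₂.2 fun u v => ?_, hf.forall₂.2 fun u v => ?_, hf.forall₃.2 fun u v w => ?_⟩
  · simp only [← hfφ.eq, ← hfψ.eq, hφψ]
  · simp only [← hfφ.eq, ← hfb, hbφ]
  · simp only [← hfψ.eq, ← hfb, hbψ]
  · simp only [← hfφ.eq, ← hfψ.eq, ← hfb, hskew u v, map_neg]
  · simp only [← hfφ.eq, ← hfψ.eq, ← hfb, ← map_add, hjacobi, map_zero]

variable {b : A → A → A} {α β : A → A} {ρ : A → V → V} {ρ' : A → W → W}

theorem IsBiHomRep.of_surjective (hf : Function.Surjective f) (hfφ : Function.Semiconj f φ φ')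
    (hfψ : Function.Semiconj f ψ ψ') (hρ : IsBiHomRep K b α β ρ φ ψ)
    (hfρ : ∀ x, Function.Semiconj f (ρ x) (ρ' x)) : IsBiHomRep K b α β ρ' φ' ψ' := by
  obtain ⟨hφ, hψ, hφψ, hρ₂, hρ₁, hρφ, hρψ, hrep⟩ := hρ
  refine ⟨isLinearMap_of_surjective hf f hφ hfφ, isLinearMap_of_surjective hf f hψ hfψ,
    hf.forall.2 fun v => ?_, fun x => isLinearMap_of_surjective hf f (hρ₂ x) (hfρ x),
    hf.forall.2 fun v => ?_, fun x => hf.forall.2 fun v => ?_, fun x => hf.forall.2 fun v => ?_,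
    fun x y => hf.forall.2 fun v => ?_⟩
  · simp only [← hfφ.eq, ← hfψ.eq, hφψ]
  · exact isLinearMap_of_surjective (f := LinearMap.id) Function.surjective_id f (hρ₁ v)
      fun x => hfρ x v
  · simp only [← hfφ.eq, ← (hfρ _).eq, hρφ]
  · simp only [← hfψ.eq, ← (hfρ _).eq, hρψ]
  · simp only [← hfψ.eq, ← (hfρ _).eq, hrep, map_sub]

theorem IsModuleKAlgebra.of_surjective (hf : Function.Surjective f)
    (hfφ : Function.Semiconj f φ φ') (hfψ : Function.Semiconj f ψ ψ') {bv : V → V → V}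
    {bw : W → W → W} (h : IsModuleKAlgebra K b α β bv ρ φ ψ)
    (hfb : ∀ u v, f (bv u v) = bw (f u) (f v)) (hfρ : ∀ x, Function.Semiconj f (ρ x) (ρ' x)) :
    IsModuleKAlgebra K b α β bw ρ' φ' ψ' := by
  obtain ⟨hbv, hρ, hder⟩ := h
  refine ⟨hbv.of_surjective hf hfφ hfψ hfb, hρ.of_surjective hf hfφ hfψ hfρ,
    fun x => hf.forall₂.2 fun u v => ?_⟩
  simp only [← hfψ.eq, ← (hfρ _).eq, ← hfb, hder, map_add]

end Image

namespace InvertibleOOperatorData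

variable {K A : Type*} [Field K] [AddCommGroup A] [Module K A] {b : A → A → A}
  {α β α' β' : A → A} {lam : K}

/-- The identity of `A` as an `O`-operator of weight `1`, when `A` is a module algebra over its own
sub-adjacent bracket. -/
protected def id {b t : A → A → A} (hαα' : Function.RightInverse α' α)
    (hα'α : Function.LeftInverse α' α) (hββ' : Function.RightInverse β' β)
    (hβ'β : Function.LeftInverse β' β)
    (h : IsModuleKAlgebra K (subAdjacentBracket b t α β α' β') α β b t α β) :
    InvertibleOOperatorData K (subAdjacentBracket b t α β α' β') α β 1 where
  V := A
  bv := b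
  ρ := t
  φ := α
  ψ := β
  φ' := α'
  ψ' := β'
  T := id
  hmod := h
  hφφ' := hαα'
  hφ'φ := hα'α
  hψψ' := hββ'
  hψ'ψ := hβ'β
  hT := LinearMap.id.isLinear
  hTbij := Function.bijective_id
  hTφ _ := rfl
  hTψ _ := rfl
  hO u v := by simp only [subAdjacentBracket, id, one_smul]

attribute [local instance] instAddCommGroup instModule

/-- The `O`-operator `T` as a linear equivalence `V ≃ A`. -/
noncomputable def equiv (D : InvertibleOOperatorData K b α β lam) : D.V ≃ₗ[K] A :=
  LinearEquiv.ofBijective D.hT.mk' D.hTbij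

/-- The bracket `lam • [·, ·]_V` transported to `A` along the `O`-operator. -/
noncomputable def inducedBracket (D : InvertibleOOperatorData K b α β lam) (x y : A) : A :=
  D.equiv (lam • D.bv (D.equiv.symm x) (D.equiv.symm y))

/-- The action `ρ` transported to `A` along the `O`-operator; it is the product `▷` of the
compatible BiHom-post-Lie structure. -/
noncomputable def inducedProduct (D : InvertibleOOperatorData K b α β lam) (x y : A) : A :=
  D.equiv (D.ρ x (D.equiv.symm y))

theorem isModuleKAlgebra_induced (D : InvertibleOOperatorData K b α β lam) :
    IsModuleKAlgebra K b α β D.inducedBracket D.inducedProduct α β :=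
  (D.hmod.const_smul lam).of_surjective (f := D.equiv.toLinearMap) D.equiv.surjective
    D.hTφ D.hTψ (fun u v => by simp [inducedBracket]) (fun x v => by simp [inducedProduct])

theorem subAdjacentBracket_induced (D : InvertibleOOperatorData K b α β lam)
    (hα'α : Function.LeftInverse α' α) (hβ'β : Function.LeftInverse β' β) :
    subAdjacentBracket D.inducedBracket D.inducedProduct α β α' β' = b := by
  have hφ : Function.Semiconj D.equiv D.φ α := D.hTφ
  have hψ : Function.Semiconj D.equiv D.ψ β := D.hTψ
  have hφ' : Function.Semiconj D.equiv D.φ' α' := hφ.inverses_right D.hφφ' hα'α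
  have hψ' : Function.Semiconj D.equiv D.ψ' β' := hψ.inverses_right D.hψψ' hβ'β
  refine funext₂ (D.equiv.surjective.forall₂.2 fun u v => ?_)
  calc
    _ = D.equiv (D.ρ (D.equiv u) v - D.ρ (D.equiv (D.φ' (D.ψ v))) (D.φ (D.ψ' u))
          + lam • D.bv u v) := by
      simp only [subAdjacentBracket, inducedBracket, inducedProduct, ← hφ.eq, ← hψ.eq, ← hφ'.eq,
        ← hψ'.eq, LinearEquiv.symm_apply_apply, map_add, map_sub]
    _ = b (D.equiv u) (D.equiv v) := (D.hO u v).symm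

end InvertibleOOperatorData

theorem compatible_biHomPostLie_iff_invertible_OOperator_general {K : Type*}
    {A : Type*} [Field K] [AddCommGroup A] [Module K A]
    (b : A → A → A) (α β α' β' : A → A)
    (hαα' : ∀ x, α (α' x) = x) (hα'α : ∀ x, α' (α x) = x)
    (hββ' : ∀ x, β (β' x) = x) (hβ'β : ∀ x, β' (β x) = x) :
    (∃ b' t' : A → A → A, IsBiHomPostLie K b' t' α β ∧
        ∀ x y, t' x y - t' (α' (β y)) (α (β' x)) + b' x y = b x y) ↔
      ∃ lam : K, Nonempty (InvertibleOOperatorData K b α β lam) := by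
  have postLie_iff {b' t' : A → A → A} :
      IsBiHomPostLie K b' t' α β ↔
        IsModuleKAlgebra K (subAdjacentBracket b' t' α β α' β') α β b' t' α β :=
    isBiHomPostLie_iff_isModuleKAlgebra_subAdjacentBracket hαα' hα'α hβ'β
  constructor
  · rintro ⟨b', t', hpost, hcompat⟩
    obtain rfl : subAdjacentBracket b' t' α β α' β' = b := funext₂ hcompat
    exact ⟨1, ⟨.id hαα' hα'α hββ' hβ'β (postLie_iff.1 hpost)⟩⟩
  · rintro ⟨lam, ⟨D⟩⟩
    have hcompat := D.subAdjacentBracket_induced hα'α hβ'β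
    exact ⟨D.inducedBracket, D.inducedProduct,
      postLie_iff.2 (hcompat.symm ▸ D.isModuleKAlgebra_induced), congrFun₂ hcompat⟩

/-- a regular BiHom-Lie algebra admits a compatible
BiHom-post-Lie structure iff it admits an invertible `O`-operator of some
weight `λ` on some regular `A`-module `K`-algebra. -/
theorem compatible_biHomPostLie_iff_invertible_OOperator {K : Type u}
    {A : Type v} [Field K] [CharZero K] [AddCommGroup A] [Module K A]
    (b : A → A → A) (α β α' β' : A → A)
    (hb : IsBiHomLie K b α β)
    (hαα' : ∀ x, α (α' x) = x) (hα'α : ∀ x, α' (α x) = x)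
    (hββ' : ∀ x, β (β' x) = x) (hβ'β : ∀ x, β' (β x) = x) :
    (∃ b' t' : A → A → A, IsBiHomPostLie K b' t' α β ∧
        ∀ x y, t' x y - t' (α' (β y)) (α (β' x)) + b' x y = b x y) ↔
      ∃ lam : K, Nonempty (InvertibleOOperatorData K b α β lam) :=
  compatible_biHomPostLie_iff_invertible_OOperator_general b α β α' β' hαα' hα'α hββ' hβ'β
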